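/- arXiv:1605.06010 — 2 statements merged into one kernel-verified Lean document; each statement's English description precedes it below -/
import Mathlib

section
/- Let (X, T) be a dynamical system and λ ∈ (0,1]. Then (X, T) is topologically mixing if and only if (K(X), T_K) is topologically mixing, if and only if (𝔽^{=λ}(X), T_F|_{𝔽^{=λ}(X)}) is topologically mixing. -/
open Metric Set TopologicalSpace Filter Function
open scoped Classical

variable {X Y : Type*}

/-- Extended Hausdorff metric on subsets of `X`: the usual Hausdorff distance between
two nonempty sets (or two empty sets), and `diam X` when exactly one of them is empty. -/
noncomputable def eHd (X : Type*) [MetricSpace X] (A B : Set X) : ℝ :=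
  if (A.Nonempty ∧ B.Nonempty) ∨ (A = ∅ ∧ B = ∅) then Metric.hausdorffDist A B
  else Metric.diam (Set.univ : Set X)

/-- The `α`-cut of a fuzzy set. -/
def cut (A : X → ℝ) (α : ℝ) : Set X := {x | α ≤ A x}

/-- The levelwise metric `d_∞` on fuzzy sets. -/
noncomputable def dinf [MetricSpace X] (A B : X → ℝ) : ℝ :=
  sSup {r : ℝ | ∃ α ∈ Set.Ioc (0:ℝ) 1, r = eHd X (cut A α) (cut B α)}

/-- A fuzzy set: an upper semicontinuous function into `[0,1]`. -/
def IsFuzzy [TopologicalSpace X] (A : X → ℝ) : Prop :=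
  (∀ x, A x ∈ Set.Icc (0:ℝ) 1) ∧ UpperSemicontinuous A

/-- `𝔽₀(X)`: nonempty (not identically zero) u.s.c. fuzzy sets. -/
def F0 (X : Type*) [TopologicalSpace X] : Set (X → ℝ) :=
  {A | IsFuzzy A ∧ ∃ x, A x ≠ 0}

/-- `𝔽^{=λ}(X)`: u.s.c. fuzzy sets with maximum value `λ`. -/
def Feq (X : Type*) [TopologicalSpace X] (lam : ℝ) : Set (X → ℝ) :=
  {A | IsFuzzy A ∧ (∃ x, A x = lam) ∧ ∀ x, A x ≤ lam}

/-- `𝔽^{≥λ}(X)`: u.s.c. fuzzy sets attaining a value `≥ λ`. -/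
def Fge (X : Type*) [TopologicalSpace X] (lam : ℝ) : Set (X → ℝ) :=
  {A | IsFuzzy A ∧ ∃ x, lam ≤ A x}

/-- Zadeh's extension of `T`. -/
noncomputable def zadeh (T : X → X) (A : X → ℝ) : X → ℝ :=
  fun x => sSup (A '' (T ⁻¹' {x}))

/-- The induced map `T_K` on the hyperspace of nonempty closed (= compact) subsets. -/
def hyper [TopologicalSpace X] (T : X → X) (hT : Continuous T)
    (A : NonemptyCompacts X) : NonemptyCompacts X :=
  ⟨⟨T '' A, A.isCompact.image hT⟩, A.nonempty.image T⟩

/-- Topological transitivity. -/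
def TopTrans [TopologicalSpace Y] (S : Y → Y) : Prop :=
  ∀ U V : Set Y, IsOpen U → IsOpen V → U.Nonempty → V.Nonempty →
    ∃ n : ℕ, (S^[n] '' U ∩ V).Nonempty

/-- Weak mixing: `S × S` is transitive. -/
def TopWeakMix [TopologicalSpace Y] (S : Y → Y) : Prop :=
  TopTrans (fun p : Y × Y => (S p.1, S p.2))

/-- Topological transitivity of `S` restricted to `C`, for the topology induced by the
(pseudo)metric `ρ`, phrased via metric balls. -/
def TransOn (ρ : Y → Y → ℝ) (S : Y → Y) (C : Set Y) : Prop :=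
  ∀ A ∈ C, ∀ B ∈ C, ∀ ε > 0, ∃ n : ℕ, ∃ E ∈ C, ρ E A < ε ∧ ρ (S^[n] E) B < ε

/-- Weak mixing of `S` restricted to `C`, phrased via metric balls. -/
def WeakMixOn (ρ : Y → Y → ℝ) (S : Y → Y) (C : Set Y) : Prop :=
  ∀ A₁ ∈ C, ∀ A₂ ∈ C, ∀ B₁ ∈ C, ∀ B₂ ∈ C, ∀ ε > 0, ∃ n : ℕ,
    ∃ E₁ ∈ C, ∃ E₂ ∈ C, ρ E₁ A₁ < ε ∧ ρ E₂ A₂ < ε ∧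
      ρ (S^[n] E₁) B₁ < ε ∧ ρ (S^[n] E₂) B₂ < ε


/-- Topological mixing: every return-time set `N(U,V)` is cofinite. -/
def TopMix [TopologicalSpace Y] (S : Y → Y) : Prop :=
  ∀ U V : Set Y, IsOpen U → IsOpen V → U.Nonempty → V.Nonempty →
    ∃ m : ℕ, ∀ n ≥ m, (S^[n] '' U ∩ V).Nonempty

/-- Topological mixing of `S` restricted to `C`, phrased via metric balls. -/
def MixOn (ρ : Y → Y → ℝ) (S : Y → Y) (C : Set Y) : Prop :=
  ∀ A ∈ C, ∀ B ∈ C, ∀ ε > 0, ∃ m : ℕ, ∀ n ≥ m,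
    ∃ E ∈ C, ρ E A < ε ∧ ρ (S^[n] E) B < ε

theorem mix_fin [MetricSpace X] {T : X → X} (h : TopMix T) (s r : Finset X) {δ : ℝ} (hδ : 0 < δ) :
    ∃ m : ℕ, ∀ n ≥ m, ∀ a ∈ s, ∀ b ∈ r, ∃ x, dist x a < δ ∧ dist (T^[n] x) b < δ := by
  have h1 : ∀ p : X × X, ∃ m : ℕ, ∀ n ≥ m, ∃ x, dist x p.1 < δ ∧ dist (T^[n] x) p.2 < δ := by
    intro p
    obtain ⟨m, hm⟩ := h (ball p.1 δ) (ball p.2 δ) isOpen_ball isOpen_ball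
      ⟨_, mem_ball_self hδ⟩ ⟨_, mem_ball_self hδ⟩
    refine ⟨m, fun n hn => ?_⟩
    obtain ⟨y, ⟨x, hx, rfl⟩, hy⟩ := hm n hn
    exact ⟨x, hx, hy⟩
  choose M hM using h1
  refine ⟨(s ×ˢ r).sup M, fun n hn a ha b hb => hM (a, b) n ?_⟩
  exact le_trans (Finset.le_sup (f := M) (Finset.mk_mem_product ha hb)) hn

theorem mix_to_hyper [MetricSpace X] {T : X → X} (hT : Continuous T)
    (h : TopMix T) : TopMix (hyper T hT) := by
  rintro U V hU hV ⟨A, hA⟩ ⟨B, hB⟩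
  obtain ⟨ε₁, h1, hU⟩ := Metric.isOpen_iff.1 hU A hA
  obtain ⟨ε₂, h2, hV⟩ := Metric.isOpen_iff.1 hV B hB
  obtain ⟨δ, hδ, hd1, hd2⟩ : ∃ δ > 0, 2 * δ < ε₁ ∧ 2 * δ < ε₂ := by
    refine ⟨min ε₁ ε₂ / 3, by positivity, ?_, ?_⟩
    · have := min_le_left ε₁ ε₂
      linarith [lt_min h1 h2]
    · have := min_le_right ε₁ ε₂
      linarith [lt_min h1 h2]
  have key : ∀ A : NonemptyCompacts X, ∃ s : Finset X, (∀ a ∈ s, a ∈ A) ∧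
      ∀ x ∈ A, ∃ a ∈ s, dist x a < δ := by
    intro A
    obtain ⟨s, hs, hc⟩ := A.isCompact.elim_nhds_subcover (fun x => ball x δ)
      (fun x _ => ball_mem_nhds x hδ)
    refine ⟨s, hs, fun x hx => ?_⟩
    simpa using hc hx
  obtain ⟨s, hs, hs'⟩ := key A
  obtain ⟨r, hr, hr'⟩ := key B
  obtain ⟨m, hm⟩ := mix_fin h s r hδ
  refine ⟨m, fun n hn => ?_⟩
  have hm := hm n hn
  choose! P hP1 hP2 using hm
  obtain ⟨a0, ha0⟩ := A.nonempty
  obtain ⟨a0, ha0, -⟩ := hs' a0 ha0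
  obtain ⟨b0, hb0⟩ := B.nonempty
  obtain ⟨b0, hb0, -⟩ := hr' b0 hb0
  let E : NonemptyCompacts X := ⟨⟨((s ×ˢ r).image (fun p => P p.1 p.2) : Finset X),
    (Finset.finite_toSet _).isCompact⟩, ⟨P a0 b0, by
      simp only [Finset.coe_image, Set.mem_image]
      exact ⟨(a0, b0), by simp [ha0, hb0], rfl⟩⟩⟩
  have hE : ∀ x, x ∈ E ↔ ∃ a ∈ s, ∃ b ∈ r, P a b = x := by
    intro x
    change x ∈ (((s ×ˢ r).image (fun p => P p.1 p.2) : Finset X) : Set X) ↔ _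
    simp only [Finset.mem_coe, Finset.mem_image, Finset.mem_product, Prod.exists]
    constructor
    · rintro ⟨a, b, ⟨ha, hb⟩, h⟩
      exact ⟨a, ha, b, hb, h⟩
    · rintro ⟨a, ha, b, hb, h⟩
      exact ⟨a, b, ⟨ha, hb⟩, h⟩
  have hit : ∀ n : ℕ, (((hyper T hT)^[n] E : NonemptyCompacts X) : Set X) = T^[n] '' E := by
    intro n
    induction n with
    | zero => simp
    | succ n ih =>
      rw [Function.iterate_succ_apply', Function.iterate_succ', Set.image_comp, ← ih]
      rfl
  refine ⟨_, ⟨E, hU ?_, rfl⟩, hV ?_⟩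
  · rw [mem_ball, NonemptyCompacts.dist_eq]
    refine lt_of_le_of_lt (hausdorffDist_le_of_mem_dist (by positivity) ?_ ?_) hd1
    · intro x hx
      obtain ⟨a, ha, b, hb, rfl⟩ := (hE x).1 hx
      exact ⟨a, hs a ha, by linarith [hP1 a ha b hb]⟩
    · intro x hx
      obtain ⟨a, ha, hxa⟩ := hs' x hx
      refine ⟨P a b0, (hE _).2 ⟨a, ha, b0, hb0, rfl⟩, ?_⟩
      have := hP1 a ha b0 hb0
      rw [dist_comm] at this
      linarith [dist_triangle x a (P a b0)]
  · rw [mem_ball, NonemptyCompacts.dist_eq, hit]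
    refine lt_of_le_of_lt (hausdorffDist_le_of_mem_dist (by positivity) ?_ ?_) hd2
    · rintro _ ⟨x, hx, rfl⟩
      obtain ⟨a, ha, b, hb, rfl⟩ := (hE x).1 hx
      exact ⟨b, hr b hb, by linarith [hP2 a ha b hb]⟩
    · intro x hx
      obtain ⟨b, hb, hxa⟩ := hr' x hx
      refine ⟨_, ⟨P a0 b, (hE _).2 ⟨a0, ha0, b, hb, rfl⟩, rfl⟩, ?_⟩
      have := hP2 a0 ha0 b hb
      rw [dist_comm] at this
      linarith [dist_triangle x b (T^[n] (P a0 b))]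

theorem hyper_to_mix [MetricSpace X] {T : X → X} (hT : Continuous T)
    (h : TopMix (hyper T hT)) : TopMix T := by
  rintro U V hU hV ⟨u, hu⟩ ⟨v, hv⟩
  have hit : ∀ (E : NonemptyCompacts X) (x : X), x ∈ E → ∀ n : ℕ,
      T^[n] x ∈ (hyper T hT)^[n] E := by
    intro E x hx n
    induction n with
    | zero => simpa
    | succ n ih =>
      rw [Function.iterate_succ_apply', Function.iterate_succ_apply']
      exact ⟨_, ih, rfl⟩
  have key : ∀ W : Set X, IsOpen W → ∀ w ∈ W, ∃ O : Set (NonemptyCompacts X), IsOpen O ∧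
      O.Nonempty ∧ ∀ E ∈ O, ∀ x ∈ E, x ∈ W := by
    intro W hW w hw
    obtain ⟨ε, hε, hb⟩ := Metric.isOpen_iff.1 hW w hw
    refine ⟨ball {w} ε, isOpen_ball, ⟨_, mem_ball_self hε⟩, fun E hE x hx => hb ?_⟩
    rw [mem_ball, NonemptyCompacts.dist_eq] at hE
    obtain ⟨y, hy, hd⟩ := exists_dist_lt_of_hausdorffDist_lt (x := x) hx hE
      (hausdorffEDist_ne_top_of_nonempty_of_bounded E.nonempty (NonemptyCompacts.nonempty _)
        E.isCompact.isBounded (NonemptyCompacts.isCompact _).isBounded)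
    have : y = w := by simpa using hy
    rw [← this]
    exact hd
  obtain ⟨O1, o1, n1, k1⟩ := key U hU u hu
  obtain ⟨O2, o2, n2, k2⟩ := key V hV v hv
  obtain ⟨m, hm⟩ := h O1 O2 o1 o2 n1 n2
  refine ⟨m, fun n hn => ?_⟩
  obtain ⟨_, ⟨E, hE, rfl⟩, hE2⟩ := hm n hn
  obtain ⟨x, hx⟩ := E.nonempty
  exact ⟨_, ⟨x, k1 E hE x hx, rfl⟩, k2 _ hE2 _ (hit E x hx n)⟩

theorem zadeh_le [TopologicalSpace X] {T : X → X} {A : X → ℝ} (hA : IsFuzzy A) (x : X) :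
    A x ≤ zadeh T A (T x) := by
  refine le_csSup ⟨1, ?_⟩ ⟨x, rfl, rfl⟩
  rintro _ ⟨y, -, rfl⟩
  exact (hA.1 y).2

theorem cut_zadeh [MetricSpace X] [CompactSpace X] {T : X → X} (hT : Continuous T)
    {A : X → ℝ} (hA : IsFuzzy A) {α : ℝ} (hα : 0 < α) :
    cut (zadeh T A) α = T '' cut A α := by
  ext x
  constructor
  · intro hx
    have hx : α ≤ zadeh T A x := hx
    by_cases hne : (T ⁻¹' {x}).Nonempty
    · obtain ⟨y, hy, hm⟩ := UpperSemicontinuousOn.exists_isMaxOn hne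
        ((isClosed_singleton.preimage hT).isCompact) (hA.2.upperSemicontinuousOn _)
      refine ⟨y, le_trans hx ?_, hy⟩
      refine csSup_le (hne.image _) ?_
      rintro _ ⟨z, hz, rfl⟩
      exact hm hz
    · rw [Set.not_nonempty_iff_eq_empty] at hne
      simp [zadeh, hne] at hx
      linarith
  · rintro ⟨y, hy, rfl⟩
    exact le_trans hy (zadeh_le hA y)

theorem usc_of_cut [TopologicalSpace X] {A : X → ℝ} (h0 : ∀ x, 0 ≤ A x)
    (h : ∀ α > 0, IsClosed (cut A α)) : UpperSemicontinuous A := by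
  rw [upperSemicontinuous_iff_isClosed_preimage]
  intro α
  rcases lt_or_ge 0 α with hα | hα
  · exact h α hα
  · convert isClosed_univ
    ext x
    simpa using hα.trans (h0 x)

theorem zadeh_fuzzy [MetricSpace X] [CompactSpace X] {T : X → X} (hT : Continuous T)
    {A : X → ℝ} (hA : IsFuzzy A) : IsFuzzy (zadeh T A) := by
  have h0 : ∀ x, 0 ≤ zadeh T A x := by
    intro x
    refine Real.sSup_nonneg ?_
    rintro _ ⟨y, -, rfl⟩
    exact (hA.1 y).1
  refine ⟨fun x => ⟨h0 x, ?_⟩, usc_of_cut h0 fun α hα => ?_⟩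
  · refine Real.sSup_le ?_ zero_le_one
    rintro _ ⟨y, -, rfl⟩
    exact (hA.1 y).2
  · rw [cut_zadeh hT hA hα]
    have : IsClosed (cut A α) := (upperSemicontinuous_iff_isClosed_preimage.1 hA.2) α
    exact (this.isCompact.image hT).isClosed

theorem zadeh_iter [MetricSpace X] [CompactSpace X] {T : X → X} (hT : Continuous T)
    {A : X → ℝ} (hA : IsFuzzy A) (n : ℕ) : IsFuzzy ((zadeh T)^[n] A) ∧
    ∀ α > 0, cut ((zadeh T)^[n] A) α = T^[n] '' cut A α := by
  induction n with
  | zero => exact ⟨hA, by simp⟩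
  | succ n ih =>
    rw [Function.iterate_succ_apply', Function.iterate_succ']
    refine ⟨zadeh_fuzzy hT ih.1, fun α hα => ?_⟩
    rw [cut_zadeh hT ih.1 hα, ih.2 α hα, Set.image_comp]

theorem dinf_le [MetricSpace X] {A B : X → ℝ} {δ : ℝ} (hδ : 0 ≤ δ)
    (h1 : ∀ α > 0, ∀ x ∈ cut A α, ∃ y ∈ cut B α, dist x y ≤ δ)
    (h2 : ∀ α > 0, ∀ x ∈ cut B α, ∃ y ∈ cut A α, dist x y ≤ δ) : dinf A B ≤ δ := by
  refine Real.sSup_le ?_ hδ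
  rintro _ ⟨α, ⟨hα, -⟩, rfl⟩
  rw [eHd, if_pos]
  · exact hausdorffDist_le_of_mem_dist hδ (h1 α hα) (h2 α hα)
  · rcases (cut A α).eq_empty_or_nonempty with h | ⟨x, hx⟩
    · right
      refine ⟨h, Set.eq_empty_iff_forall_notMem.2 fun x hx => ?_⟩
      obtain ⟨y, hy, -⟩ := h2 α hα x hx
      rw [h] at hy
      exact hy
    · left
      obtain ⟨y, hy, -⟩ := h1 α hα x hx
      exact ⟨⟨x, hx⟩, ⟨y, hy⟩⟩

theorem eHd_le_dinf [MetricSpace X] [CompactSpace X] (A B : X → ℝ) {α : ℝ}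
    (hα : α ∈ Set.Ioc (0:ℝ) 1) : eHd X (cut A α) (cut B α) ≤ dinf A B := by
  refine le_csSup ⟨diam (univ : Set X), ?_⟩ ⟨α, hα, rfl⟩
  have hb : ∀ x y : X, dist x y ≤ diam (univ : Set X) := fun x y =>
    dist_le_diam_of_mem isCompact_univ.isBounded (mem_univ _) (mem_univ _)
  rintro _ ⟨β, -, rfl⟩
  rw [eHd]
  split_ifs with h
  · rcases h with ⟨⟨a, ha⟩, ⟨b, hb'⟩⟩ | ⟨h, h'⟩
    · exact hausdorffDist_le_of_mem_dist diam_nonneg (fun x _ => ⟨b, hb', hb _ _⟩)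
        (fun x _ => ⟨a, ha, hb _ _⟩)
    · rw [h, h', hausdorffDist_empty]
      exact diam_nonneg
  · exact le_rfl

theorem approx [MetricSpace X] [CompactSpace X] {A : X → ℝ} (hA : IsFuzzy A) {δ : ℝ}
    (hδ : 0 < δ) : ∃ s : Finset X, ∀ x, ∃ a ∈ s, dist x a ≤ 2 * δ ∧ A x ≤ A a := by
  obtain ⟨t, -, ht⟩ := (isCompact_univ (X := X)).elim_nhds_subcover (fun x => ball x δ)
      (fun x _ => ball_mem_nhds x hδ)
  have : ∀ c : X, ∃ a ∈ closedBall c δ, IsMaxOn A (closedBall c δ) a := fun c =>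
    UpperSemicontinuousOn.exists_isMaxOn ⟨c, mem_closedBall_self hδ.le⟩
      isClosed_closedBall.isCompact (hA.2.upperSemicontinuousOn _)
  choose f hf1 hf2 using this
  refine ⟨t.image f, fun x => ?_⟩
  obtain ⟨c, hc, hx⟩ : ∃ c ∈ t, dist x c < δ := by simpa using ht (mem_univ x)
  refine ⟨f c, Finset.mem_image_of_mem _ hc, ?_, hf2 c (a := x) hx.le⟩
  have := mem_closedBall'.1 (hf1 c)
  linarith [dist_triangle x c (f c)]

theorem mix_to_zadeh [MetricSpace X] [CompactSpace X] {T : X → X} (hT : Continuous T)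
    {lam : ℝ} (hlam : lam ∈ Set.Ioc (0:ℝ) 1) (h : TopMix T) :
    MixOn dinf (zadeh T) (Feq X lam) := by
  rintro A ⟨hA, ⟨xA, hxA⟩, hAl⟩ B ⟨hB, ⟨xB, hxB⟩, hBl⟩ ε hε
  have hδ : 0 < ε / 4 := by positivity
  obtain ⟨δ, hδ, hδε⟩ : ∃ δ > 0, 3 * δ < ε := ⟨ε / 4, hδ, by linarith⟩
  obtain ⟨s, hs⟩ := approx hA hδ
  obtain ⟨r, hr⟩ := approx hB hδ
  obtain ⟨a0, ha0, -, ha0'⟩ := hs xA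
  obtain ⟨b0, hb0, -, hb0'⟩ := hr xB
  have hAa : A a0 = lam := le_antisymm (hAl _) (hxA ▸ ha0')
  have hBb : B b0 = lam := le_antisymm (hBl _) (hxB ▸ hb0')
  obtain ⟨m, hm⟩ := mix_fin h s r hδ
  refine ⟨m, fun n hn => ?_⟩
  have hm := hm n hn
  choose! P hP1 hP2 using hm
  let g : X → (s × r) → ℝ := fun x p => if P p.1 p.2 = x then min (A p.1) (B p.2) else 0
  let E : X → ℝ := fun x => ⨆ p : s × r, g x p
  haveI : Nonempty (s × r) := ⟨(⟨a0, ha0⟩, ⟨b0, hb0⟩)⟩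
  have hg : ∀ x p, 0 ≤ g x p ∧ g x p ≤ lam := by
    intro x p
    simp only [g]
    split_ifs
    · exact ⟨le_min (hA.1 _).1 (hB.1 _).1, (min_le_left _ _).trans (hAl _)⟩
    · exact ⟨le_rfl, hlam.1.le⟩
  have hE : ∀ α > 0, ∀ x, x ∈ cut E α ↔
      ∃ a ∈ s, ∃ b ∈ r, P a b = x ∧ α ≤ A a ∧ α ≤ B b := by
    intro α hα x
    constructor
    · intro hx
      obtain ⟨p, hp⟩ := exists_eq_ciSup_of_finite (f := g x)
      have hx : α ≤ g x p := by rw [hp]; exact hx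
      simp only [g] at hx
      split_ifs at hx with hc
      · exact ⟨p.1, p.1.2, p.2, p.2.2, hc, le_min_iff.1 hx⟩
      · linarith
    · rintro ⟨a, ha, b, hb, rfl, h1, h2⟩
      have : g (P a b) (⟨a, ha⟩, ⟨b, hb⟩) ≤ E (P a b) :=
        le_ciSup (Set.finite_range (g (P a b))).bddAbove _
      refine le_trans ?_ this
      simp [g, h1, h2]
  have hE0 : ∀ x, 0 ≤ E x := fun x => Real.iSup_nonneg fun p => (hg x p).1
  have hEl : ∀ x, E x ≤ lam := fun x => ciSup_le fun p => (hg x p).2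
  have hEf : IsFuzzy E := by
    refine ⟨fun x => ⟨hE0 x, (hEl x).trans hlam.2⟩, usc_of_cut hE0 fun α hα => ?_⟩
    refine Set.Finite.isClosed (Set.Finite.subset
      ((s ×ˢ r).image (fun p => P p.1 p.2)).finite_toSet ?_)
    intro x hx
    obtain ⟨a, ha, b, hb, rfl, -⟩ := (hE α hα x).1 hx
    simp only [Finset.mem_coe, Finset.mem_image]
    exact ⟨(a, b), by simp [ha, hb], rfl⟩
  have hcA : ∀ α > 0, ∀ x ∈ cut A α, α ≤ lam := fun α _ x hx => le_trans hx (hAl x)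
  have hcB : ∀ α > 0, ∀ x ∈ cut B α, α ≤ lam := fun α _ x hx => le_trans hx (hBl x)
  refine ⟨E, ⟨hEf, ⟨P a0 b0, le_antisymm (hEl _) ?_⟩, hEl⟩, ?_, ?_⟩
  · exact (hE lam hlam.1 _).2 ⟨a0, ha0, b0, hb0, rfl, hAa.ge, hBb.ge⟩
  · refine lt_of_le_of_lt (dinf_le (by positivity) ?_ ?_) hδε
    · intro α hα x hx
      obtain ⟨a, ha, b, hb, rfl, h1, h2⟩ := (hE α hα x).1 hx
      exact ⟨a, h1, by linarith [hP1 a ha b hb]⟩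
    · intro α hα x hx
      obtain ⟨a, ha, hd, hle⟩ := hs x
      refine ⟨P a b0, (hE α hα _).2 ⟨a, ha, b0, hb0, rfl, le_trans hx hle, ?_⟩, ?_⟩
      · rw [hBb]; exact hcA α hα x hx
      · have := hP1 a ha b0 hb0
        rw [dist_comm] at this
        linarith [dist_triangle x a (P a b0)]
  · refine lt_of_le_of_lt (dinf_le (by positivity) ?_ ?_) hδε
    · intro α hα x hx
      rw [(zadeh_iter hT hEf n).2 α hα] at hx
      obtain ⟨x, hx, rfl⟩ := hx
      obtain ⟨a, ha, b, hb, rfl, h1, h2⟩ := (hE α hα x).1 hx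
      exact ⟨b, h2, by linarith [hP2 a ha b hb]⟩
    · intro α hα x hx
      rw [(zadeh_iter hT hEf n).2 α hα]
      obtain ⟨b, hb, hd, hle⟩ := hr x
      refine ⟨_, ⟨P a0 b, (hE α hα _).2 ⟨a0, ha0, b, hb, rfl, ?_, le_trans hx hle⟩, rfl⟩, ?_⟩
      · rw [hAa]; exact hcB α hα x hx
      · have := hP2 a0 ha0 b hb
        rw [dist_comm] at this
        linarith [dist_triangle x b (T^[n] (P a0 b))]

theorem zadeh_to_mix [MetricSpace X] [CompactSpace X] [Nontrivial X] {T : X → X}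
    (hT : Continuous T) {lam : ℝ} (hlam : lam ∈ Set.Ioc (0:ℝ) 1)
    (h : MixOn dinf (zadeh T) (Feq X lam)) : TopMix T := by
  rintro U V hU hV ⟨u, hu⟩ ⟨v, hv⟩
  obtain ⟨ε₁, h1, hU⟩ := Metric.isOpen_iff.1 hU u hu
  obtain ⟨ε₂, h2, hV⟩ := Metric.isOpen_iff.1 hV v hv
  let C : X → X → ℝ := fun w x => if x = w then lam else 0
  have hcut : ∀ w, ∀ α > 0, ∀ x ∈ cut (C w) α, x = w := by
    intro w α hα x hx
    by_contra hne
    have hx : α ≤ C w x := hx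
    simp only [C, if_neg hne] at hx
    linarith
  have hC : ∀ w, C w ∈ Feq X lam := by
    intro w
    have h0 : ∀ x, 0 ≤ C w x := by
      intro x
      simp only [C]
      split_ifs
      exacts [hlam.1.le, le_rfl]
    have hl : ∀ x, C w x ≤ lam := by
      intro x
      simp only [C]
      split_ifs
      exacts [le_rfl, hlam.1.le]
    refine ⟨⟨fun x => ⟨h0 x, (hl x).trans hlam.2⟩, usc_of_cut h0 fun α hα => ?_⟩,
      ⟨w, by simp [C]⟩, hl⟩
    exact ((Set.finite_singleton w).subset (fun x hx => hcut w α hα x hx)).isClosed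
  have key : ∀ (w : X) (F : X → ℝ) (ε : ℝ), (cut F lam).Nonempty → dinf F (C w) < ε →
      ∀ x ∈ cut F lam, dist x w < ε := by
    intro w F ε hF hd x hx
    have hw : (cut (C w) lam).Nonempty := ⟨w, by simp [cut, C]⟩
    have := (eHd_le_dinf F (C w) hlam).trans_lt hd
    rw [eHd, if_pos (Or.inl ⟨hF, hw⟩)] at this
    obtain ⟨y, hy, hxy⟩ := exists_dist_lt_of_hausdorffDist_lt hx this
      (hausdorffEDist_ne_top_of_nonempty_of_bounded hF hw
        (isCompact_univ.isBounded.subset (subset_univ _))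
        (isCompact_univ.isBounded.subset (subset_univ _)))
    rwa [hcut w lam hlam.1 y hy] at hxy
  obtain ⟨m, hm⟩ := h _ (hC u) _ (hC v) (min ε₁ ε₂) (lt_min h1 h2)
  refine ⟨m, fun n hn => ?_⟩
  obtain ⟨E, ⟨hEf, ⟨x, hx⟩, -⟩, hd1, hd2⟩ := hm n hn
  have hx1 : x ∈ cut E lam := hx.ge
  have hx2 : T^[n] x ∈ cut ((zadeh T)^[n] E) lam := by
    rw [(zadeh_iter hT hEf n).2 lam hlam.1]
    exact ⟨x, hx1, rfl⟩
  refine ⟨_, ⟨x, hU ?_, rfl⟩, hV ?_⟩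
  · exact (key u E _ ⟨x, hx1⟩ hd1 x hx1).trans_le (min_le_left _ _)
  · exact (key v _ _ ⟨_, hx2⟩ hd2 _ hx2).trans_le (min_le_right _ _)

/-- `(X,T)` is topologically mixing iff `(K(X), T_K)` is topologically mixing iff the
Zadeh extension on `𝔽^{=λ}(X)` is topologically mixing. -/
theorem mixing_iff_hyper_iff_zadeh {X : Type*} [MetricSpace X] [CompactSpace X] [Nontrivial X]
    (T : X → X) (hT : Continuous T) (hTs : Function.Surjective T)
    (lam : ℝ) (hlam : lam ∈ Set.Ioc (0:ℝ) 1) :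
    (TopMix T ↔ TopMix (hyper T hT)) ∧
      (TopMix (hyper T hT) ↔ MixOn dinf (zadeh T) (Feq X lam)) := by
  have h1 : TopMix T ↔ TopMix (hyper T hT) := ⟨mix_to_hyper hT, hyper_to_mix hT⟩
  exact ⟨h1, h1.symm.trans ⟨mix_to_zadeh hT hlam, zadeh_to_mix hT hlam⟩⟩
end

section
/- Let (X, T) be a dynamical system and ℱ a full Furstenberg family of subsets of ℤ⁺. The following statements are equivalent: (1) (X, T) is ℱ-mixing; (2) (K(X), T_K) is ℱ-transitive; (3) (K(X), T_K) is ℱ-mixing; (4) for every λ ∈ (0,1], (𝔽^{=λ}(X), T_F|_{𝔽^{=λ}(X)}) is ℱ-transitive; (5) for every λ ∈ (0,1], (𝔽^{=λ}(X), T_F|_{𝔽^{=λ}(X)}) is ℱ-mixing; (6) there exists λ ∈ (0,1] such that (𝔽^{=λ}(X), T_F|_{𝔽^{=λ}(X)}) is ℱ-transitive; (7) there exists λ ∈ (0,1] such that (𝔽^{=λ}(X), T_F|_{𝔽^{=λ}(X)}) is ℱ-mixing. -/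
open Metric Set TopologicalSpace Filter Function
open scoped Classical

variable {X Y : Type*}

/-- A Furstenberg family: an upward-hereditary collection of subsets of `ℤ⁺ = ℕ`. -/
def IsFamily (F : Set (Set ℕ)) : Prop :=
  ∀ A B : Set ℕ, A ⊆ B → A ∈ F → B ∈ F

/-- The dual family `κℱ`. -/
def dualFam (F : Set (Set ℕ)) : Set (Set ℕ) :=
  {A | ∀ B ∈ F, (A ∩ B).Nonempty}

/-- A full family: every member of `ℱ·κℱ` is infinite. -/
def FullFam (F : Set (Set ℕ)) : Prop :=
  IsFamily F ∧ ∀ A ∈ F, ∀ B ∈ dualFam F, (A ∩ B).Infinite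

/-- `ℱ`-transitivity on a topological space: `N(U,V) ∈ ℱ` for all nonempty open `U, V`. -/
def FTransTop [TopologicalSpace Y] (F : Set (Set ℕ)) (S : Y → Y) : Prop :=
  ∀ U V : Set Y, IsOpen U → IsOpen V → U.Nonempty → V.Nonempty →
    {n : ℕ | (S^[n] '' U ∩ V).Nonempty} ∈ F

/-- `ℱ`-mixing on a topological space: `S × S` is `ℱ`-transitive. -/
def FMixTop [TopologicalSpace Y] (F : Set (Set ℕ)) (S : Y → Y) : Prop :=
  FTransTop F (fun p : Y × Y => (S p.1, S p.2))

/-- `ℱ`-transitivity of `S` restricted to `C`, phrased via metric balls. -/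
def FTransOn (F : Set (Set ℕ)) (ρ : Y → Y → ℝ) (S : Y → Y) (C : Set Y) : Prop :=
  ∀ A ∈ C, ∀ B ∈ C, ∀ ε > 0,
    {n : ℕ | ∃ E ∈ C, ρ E A < ε ∧ ρ (S^[n] E) B < ε} ∈ F

/-- `ℱ`-mixing of `S` restricted to `C`, phrased via metric balls. -/
def FMixOn (F : Set (Set ℕ)) (ρ : Y → Y → ℝ) (S : Y → Y) (C : Set Y) : Prop :=
  ∀ A₁ ∈ C, ∀ A₂ ∈ C, ∀ B₁ ∈ C, ∀ B₂ ∈ C, ∀ ε > 0,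
    {n : ℕ | ∃ E₁ ∈ C, ∃ E₂ ∈ C, ρ E₁ A₁ < ε ∧ ρ E₂ A₂ < ε ∧
      ρ (S^[n] E₁) B₁ < ε ∧ ρ (S^[n] E₂) B₂ < ε} ∈ F

lemma aux_le_sSup {X : Type*} [TopologicalSpace X] {A : X → ℝ}
    (hA : UpperSemicontinuous A) {S : Set X} (hS : IsCompact S) (hne : S.Nonempty) (α : ℝ) :
    α ≤ sSup (A '' S) ↔ ∃ x ∈ S, α ≤ A x := by
  obtain ⟨a, haS, ha⟩ := UpperSemicontinuousOn.exists_isMaxOn hne hS (hA.upperSemicontinuousOn S)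
  have hg : IsGreatest (A '' S) (A a) := by
    refine ⟨⟨a, haS, rfl⟩, ?_⟩
    rintro _ ⟨x, hx, rfl⟩
    exact ha hx
  rw [hg.csSup_eq]
  constructor
  · intro h; exact ⟨a, haS, h⟩
  · rintro ⟨x, hx, h⟩; exact h.trans (ha hx)

lemma aux_cut_closed {X : Type*} [TopologicalSpace X] {A : X → ℝ}
    (hA : UpperSemicontinuous A) (α : ℝ) : IsClosed (cut A α) :=
  upperSemicontinuous_iff_isClosed_preimage.1 hA α

lemma aux_usc_of_cut {X : Type*} [TopologicalSpace X] {A : X → ℝ}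
    (h : ∀ α, IsClosed (cut A α)) : UpperSemicontinuous A :=
  upperSemicontinuous_iff_isClosed_preimage.2 h

lemma aux_zadeh_cut {X : Type*} [MetricSpace X] [CompactSpace X]
    {T : X → X} (hT : Continuous T) (hTs : Function.Surjective T) {A : X → ℝ}
    (hA : UpperSemicontinuous A) (α : ℝ) : cut (zadeh T A) α = T '' cut A α := by
  ext x
  have := aux_le_sSup hA (S := T ⁻¹' {x}) ((isClosed_singleton.preimage hT).isCompact)
    (by obtain ⟨y, hy⟩ := hTs x; exact ⟨y, hy⟩) α
  change α ≤ sSup _ ↔ _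
  rw [this]
  constructor
  · rintro ⟨y, hy, h⟩; exact ⟨y, h, hy⟩
  · rintro ⟨y, h, hy⟩; exact ⟨y, hy, h⟩

lemma aux_zadeh_iter {X : Type*} [MetricSpace X] [CompactSpace X]
    {T : X → X} (hT : Continuous T) (hTs : Function.Surjective T) {A : X → ℝ}
    (hA : UpperSemicontinuous A) (n : ℕ) :
    UpperSemicontinuous ((zadeh T)^[n] A) ∧ ∀ α, cut ((zadeh T)^[n] A) α = T^[n] '' cut A α := by
  induction n with
  | zero => exact ⟨hA, fun α => by simp⟩
  | succ n ih =>
    rw [Function.iterate_succ_apply']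
    refine ⟨aux_usc_of_cut fun α => ?_, fun α => ?_⟩
    · rw [aux_zadeh_cut hT hTs ih.1]
      exact ((aux_cut_closed ih.1 α).isCompact.image hT).isClosed
    · rw [aux_zadeh_cut hT hTs ih.1, ih.2, ← Set.image_comp, Function.iterate_succ']

lemma aux_eHd_le {X : Type*} [MetricSpace X] [CompactSpace X] (A B : Set X) :
    eHd X A B ≤ Metric.diam (Set.univ : Set X) := by
  unfold eHd
  split_ifs with h
  · rcases h with ⟨ha, hb⟩ | ⟨rfl, rfl⟩
    · exact (hausdorffDist_le_diam ha (Bornology.IsBounded.all _) hb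
        (Bornology.IsBounded.all _)).trans
        (Metric.diam_mono (Set.subset_univ _) (Bornology.IsBounded.all _))
    · simp [Metric.diam_nonneg]
  · exact le_rfl

lemma aux_le_dinf {X : Type*} [MetricSpace X] [CompactSpace X] (A B : X → ℝ) {α : ℝ}
    (hα : α ∈ Set.Ioc (0:ℝ) 1) : eHd X (cut A α) (cut B α) ≤ dinf A B := by
  refine le_csSup ⟨Metric.diam (Set.univ : Set X), ?_⟩ ⟨α, hα, rfl⟩
  rintro _ ⟨β, _, rfl⟩
  exact aux_eHd_le _ _

lemma aux_dinf_le {X : Type*} [MetricSpace X] (A B : X → ℝ) {c : ℝ}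
    (h : ∀ α ∈ Set.Ioc (0:ℝ) 1, eHd X (cut A α) (cut B α) ≤ c) : dinf A B ≤ c := by
  refine csSup_le ⟨_, 1, by norm_num, rfl⟩ ?_
  rintro _ ⟨β, hβ, rfl⟩
  exact h β hβ

/-- The set of points close to `A` whose image under `S` is close to `B`. -/
def auxM {X : Type*} [MetricSpace X] (S : X → X) (δ : ℝ) (A B : Set X) : Set X :=
  {z | (∃ x ∈ A, dist z x ≤ δ) ∧ ∃ y ∈ B, dist (S z) y ≤ δ}

lemma auxM_closed {X : Type*} [MetricSpace X] {S : X → X} (hS : Continuous S) {δ : ℝ}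
    (hδ : 0 ≤ δ) {A B : Set X} (hA : IsCompact A) (hB : IsCompact B) :
    IsClosed (auxM S δ A B) := by
  have key : ∀ C : Set X, IsCompact C → IsClosed {z | ∃ x ∈ C, dist z x ≤ δ} := by
    intro C hC
    have : {z | ∃ x ∈ C, dist z x ≤ δ} = Metric.cthickening δ C := by
      rw [hC.cthickening_eq_biUnion_closedBall hδ]
      ext z; simp
    rw [this]; exact Metric.isClosed_cthickening
  exact (key A hA).inter ((key B hB).preimage hS)

/-- Every point can be moved close to every point by `S`. -/
def auxG {X : Type*} [MetricSpace X] (S : X → X) (δ : ℝ) : Prop :=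
  ∀ x y, ∃ z, dist z x ≤ δ ∧ dist (S z) y ≤ δ

lemma auxM_nonempty {X : Type*} [MetricSpace X] {S : X → X} {δ : ℝ} (hG : auxG S δ)
    {A B : Set X} (hA : A.Nonempty) (hB : B.Nonempty) : (auxM S δ A B).Nonempty := by
  obtain ⟨x, hx⟩ := hA
  obtain ⟨y, hy⟩ := hB
  obtain ⟨z, h1, h2⟩ := hG x y
  exact ⟨z, ⟨x, hx, h1⟩, y, hy, h2⟩

lemma auxM_dist {X : Type*} [MetricSpace X] {S : X → X} {δ : ℝ} (hδ : 0 ≤ δ) (hG : auxG S δ)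
    {A B : Set X} (hA : A.Nonempty) (hB : B.Nonempty) :
    hausdorffDist (auxM S δ A B) A ≤ δ ∧ hausdorffDist (S '' auxM S δ A B) B ≤ δ := by
  constructor
  · refine hausdorffDist_le_of_mem_dist hδ (fun z hz => hz.1) fun x hx => ?_
    obtain ⟨y, hy⟩ := hB
    obtain ⟨z, h1, h2⟩ := hG x y
    exact ⟨z, ⟨⟨x, hx, h1⟩, y, hy, h2⟩, by rwa [dist_comm]⟩
  · refine hausdorffDist_le_of_mem_dist hδ ?_ fun y hy => ?_
    · rintro _ ⟨z, hz, rfl⟩; exact hz.2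
    obtain ⟨x, hx⟩ := hA
    obtain ⟨z, h1, h2⟩ := hG x y
    exact ⟨S z, ⟨z, ⟨⟨x, hx, h1⟩, y, hy, h2⟩, rfl⟩, by rwa [dist_comm]⟩

lemma aux_cut_nonempty {X : Type*} [TopologicalSpace X] {A : X → ℝ} {lam α : ℝ}
    (hA : A ∈ Feq X lam) : (cut A α).Nonempty ↔ α ≤ lam := by
  obtain ⟨_, ⟨x, hx⟩, h⟩ := hA
  constructor
  · rintro ⟨y, hy⟩; exact le_trans hy (h y)
  · intro h'; exact ⟨x, by simpa [cut, hx] using h'⟩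

lemma aux_fuzzy {X : Type*} [MetricSpace X] [CompactSpace X]
    {T : X → X} (hT : Continuous T) (hTs : Function.Surjective T) {lam : ℝ}
    {A B : X → ℝ} (hA : A ∈ Feq X lam) (hB : B ∈ Feq X lam) {δ : ℝ} (hδ : 0 ≤ δ) {n : ℕ}
    (hG : auxG T^[n] δ) :
    ∃ E ∈ Feq X lam, dinf E A ≤ δ ∧ dinf ((zadeh T)^[n] E) B ≤ δ := by
  let E : X → ℝ := fun z =>
    min (sSup (A '' closedBall z δ)) (sSup (B '' closedBall (T^[n] z) δ))
  have hcut : ∀ α, cut E α = auxM T^[n] δ (cut A α) (cut B α) := by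
    intro α
    ext z
    change α ≤ min _ _ ↔ _
    rw [le_min_iff, aux_le_sSup hA.1.2 isClosed_closedBall.isCompact
      (nonempty_closedBall.2 hδ), aux_le_sSup hB.1.2 isClosed_closedBall.isCompact
      (nonempty_closedBall.2 hδ)]
    simp only [mem_closedBall, auxM, cut, mem_setOf_eq, dist_comm z, dist_comm (T^[n] z)]
    constructor
    · rintro ⟨⟨x, a, b⟩, ⟨y, c, d⟩⟩; exact ⟨⟨x, b, a⟩, ⟨y, d, c⟩⟩
    · rintro ⟨⟨x, a, b⟩, ⟨y, c, d⟩⟩; exact ⟨⟨x, b, a⟩, ⟨y, d, c⟩⟩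
  have husc : UpperSemicontinuous E := aux_usc_of_cut fun α => by
    rw [hcut]
    exact auxM_closed (hT.iterate n) hδ (aux_cut_closed hA.1.2 α).isCompact
      (aux_cut_closed hB.1.2 α).isCompact
  have hle : ∀ z, E z ≤ lam := by
    intro z
    have : z ∈ cut E (E z) := le_refl (E z)
    rw [hcut] at this
    obtain ⟨⟨x, hx, _⟩, _⟩ := this
    exact le_trans hx (hA.2.2 x)
  have hlam : lam ≤ 1 := by
    obtain ⟨x, hx⟩ := hA.2.1
    rw [← hx]; exact (hA.1.1 x).2
  have hE : E ∈ Feq X lam := by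
    refine ⟨⟨fun z => ⟨?_, (hle z).trans hlam⟩, husc⟩, ?_, hle⟩
    · refine le_min ?_ ?_
      · exact (aux_le_sSup hA.1.2 isClosed_closedBall.isCompact
          (nonempty_closedBall.2 hδ) _).2 ⟨z, mem_closedBall_self hδ, (hA.1.1 z).1⟩
      · exact (aux_le_sSup hB.1.2 isClosed_closedBall.isCompact
          (nonempty_closedBall.2 hδ) _).2 ⟨T^[n] z, mem_closedBall_self hδ, (hB.1.1 _).1⟩
    · have : (cut E lam).Nonempty := by
        rw [hcut]
        exact auxM_nonempty hG ((aux_cut_nonempty hA).2 le_rfl) ((aux_cut_nonempty hB).2 le_rfl)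
      obtain ⟨z, hz⟩ := this
      exact ⟨z, le_antisymm (hle z) hz⟩
  refine ⟨E, hE, aux_dinf_le _ _ fun α _ => ?_, aux_dinf_le _ _ fun α _ => ?_⟩
  · by_cases h : α ≤ lam
    · have h1 := (aux_cut_nonempty hA).2 h
      have h2 := (aux_cut_nonempty hB).2 h
      rw [eHd, if_pos (Or.inl ⟨(aux_cut_nonempty hE).2 h, h1⟩), hcut]
      exact (auxM_dist hδ hG h1 h2).1
    · have h1 := not_nonempty_iff_eq_empty.1 (mt (aux_cut_nonempty hA).1 h)
      have h3 := not_nonempty_iff_eq_empty.1 (mt (aux_cut_nonempty hE).1 h)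
      rw [eHd, if_pos (Or.inr ⟨h3, h1⟩), h3, hausdorffDist_empty']
      exact hδ
  · rw [(aux_zadeh_iter hT hTs husc n).2 α]
    by_cases h : α ≤ lam
    · have h1 := (aux_cut_nonempty hA).2 h
      have h2 := (aux_cut_nonempty hB).2 h
      rw [eHd, if_pos (Or.inl ⟨((aux_cut_nonempty hE).2 h).image _, h2⟩), hcut]
      exact (auxM_dist hδ hG h1 h2).2
    · have h1 := not_nonempty_iff_eq_empty.1 (mt (aux_cut_nonempty hB).1 h)
      have h3 := not_nonempty_iff_eq_empty.1 (mt (aux_cut_nonempty hE).1 h)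
      rw [eHd, if_pos (Or.inr ⟨by rw [h3, image_empty], h1⟩), h1, hausdorffDist_empty]
      exact hδ

lemma aux_prod_iter {Y : Type*} (S : Y → Y) (n : ℕ) (p : Y × Y) :
    (fun p : Y × Y => (S p.1, S p.2))^[n] p = (S^[n] p.1, S^[n] p.2) := by
  induction n generalizing p with
  | zero => rfl
  | succ n ih => rw [Function.iterate_succ_apply, ih]; rfl

lemma aux_mix_iff {Y : Type*} [TopologicalSpace Y] {F : Set (Set ℕ)} (hF : IsFamily F)
    {S : Y → Y} (h : FMixTop F S) {U₁ U₂ V₁ V₂ : Set Y} (hU₁ : IsOpen U₁) (hU₂ : IsOpen U₂)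
    (hV₁ : IsOpen V₁) (hV₂ : IsOpen V₂) (nU₁ : U₁.Nonempty) (nU₂ : U₂.Nonempty)
    (nV₁ : V₁.Nonempty) (nV₂ : V₂.Nonempty) :
    {n : ℕ | (∃ x ∈ U₁, S^[n] x ∈ V₁) ∧ ∃ x ∈ U₂, S^[n] x ∈ V₂} ∈ F := by
  refine hF _ _ ?_ (h (U₁ ×ˢ U₂) (V₁ ×ˢ V₂) (hU₁.prod hU₂) (hV₁.prod hV₂)
    (nU₁.prod nU₂) (nV₁.prod nV₂))
  rintro n ⟨_, ⟨p, hp, rfl⟩, hq⟩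
  rw [aux_prod_iter] at hq
  exact ⟨⟨p.1, hp.1, hq.1⟩, ⟨p.2, hp.2, hq.2⟩⟩

lemma aux_inter {Y ι : Type*} [TopologicalSpace Y] [Nonempty Y] {F : Set (Set ℕ)}
    (hF : IsFamily F) (h0 : ∅ ∉ F) {S : Y → Y} (hS : Continuous S) (h : FMixTop F S)
    (s : Finset ι) (U V : ι → Set Y) (hU : ∀ i, IsOpen (U i)) (hV : ∀ i, IsOpen (V i))
    (nU : ∀ i, (U i).Nonempty) (nV : ∀ i, (V i).Nonempty) :
    ∃ U' V' : Set Y, IsOpen U' ∧ IsOpen V' ∧ U'.Nonempty ∧ V'.Nonempty ∧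
      ∀ n, (∃ x ∈ U', S^[n] x ∈ V') → ∀ i ∈ s, ∃ x ∈ U i, S^[n] x ∈ V i := by
  induction s using Finset.induction_on with
  | empty => exact ⟨univ, univ, isOpen_univ, isOpen_univ, univ_nonempty, univ_nonempty, by simp⟩
  | insert i s _ ih =>
    obtain ⟨U', V', oU, oV, neU, neV, hUV⟩ := ih
    have hm := aux_mix_iff hF h oU oV (hU i) (hV i) neU neV (nU i) (nV i)
    obtain ⟨m, ⟨x, hx, hx'⟩, ⟨y, hy, hy'⟩⟩ : Set.Nonempty
        {n : ℕ | (∃ x ∈ U', S^[n] x ∈ U i) ∧ ∃ x ∈ V', S^[n] x ∈ V i} := by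
      rw [Set.nonempty_iff_ne_empty]
      intro he
      rw [he] at hm
      exact h0 hm
    refine ⟨U' ∩ S^[m] ⁻¹' U i, V' ∩ S^[m] ⁻¹' V i, oU.inter ((hU i).preimage (hS.iterate m)),
      oV.inter ((hV i).preimage (hS.iterate m)), ⟨x, hx, hx'⟩, ⟨y, hy, hy'⟩, ?_⟩
    rintro n ⟨z, hz, hz'⟩ j hj
    rcases Finset.mem_insert.1 hj with rfl | hj
    · refine ⟨S^[m] z, hz.2, ?_⟩
      rw [← Function.iterate_add_apply, add_comm, Function.iterate_add_apply]
      exact hz'.2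
    · exact hUV n ⟨z, hz.1, hz'.1⟩ j hj

lemma aux_G_mem {X : Type*} [MetricSpace X] [CompactSpace X] [Nonempty X] {F : Set (Set ℕ)}
    (hF : IsFamily F) {T : X → X} (hT : Continuous T) (h : FMixTop F T) {δ : ℝ} (hδ : 0 < δ) :
    {n : ℕ | auxG T^[n] δ} ∈ F := by
  by_cases h0 : ∅ ∈ F
  · exact hF _ _ (empty_subset _) h0
  obtain ⟨t, _, htf, ht⟩ := finite_cover_balls_of_compact (isCompact_univ (X := X))
    (half_pos hδ)
  obtain ⟨U, V, oU, oV, nU, nV, hUV⟩ := aux_inter hF h0 hT h (htf.toFinset ×ˢ htf.toFinset)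
    (fun p : X × X => ball p.1 (δ/2)) (fun p => ball p.2 (δ/2)) (fun _ => isOpen_ball)
    (fun _ => isOpen_ball) (fun p => nonempty_ball.2 (half_pos hδ))
    (fun p => nonempty_ball.2 (half_pos hδ))
  refine hF _ _ ?_ (aux_mix_iff hF h oU oU oV oV nU nU nV nV)
  rintro n ⟨hn, _⟩ x y
  obtain ⟨a, ha, hxa⟩ : ∃ a ∈ t, dist x a < δ/2 := by simpa using ht (mem_univ x)
  obtain ⟨b, hb, hyb⟩ : ∃ a ∈ t, dist y a < δ/2 := by simpa using ht (mem_univ y)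
  obtain ⟨z, hz, hz'⟩ := hUV n hn (a, b) (by simp [ha, hb])
  simp only [mem_ball] at hz hz'
  refine ⟨z, ?_, ?_⟩
  · have := dist_triangle_right z x a; linarith
  · have := dist_triangle_right (T^[n] z) y b; linarith

/-- The property extracted from transitivity on the hyperspaces. -/
def auxA {X : Type*} [MetricSpace X] (F : Set (Set ℕ)) (T : X → X) : Prop :=
  ∀ x y₁ y₂ : X, ∀ r > 0,
    {n : ℕ | (∃ z, dist z x < r ∧ dist (T^[n] z) y₁ < r) ∧
      ∃ z, dist z x < r ∧ dist (T^[n] z) y₂ < r} ∈ F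

lemma auxA_mix {X : Type*} [MetricSpace X] {F : Set (Set ℕ)} (hF : IsFamily F) {T : X → X}
    (hT : Continuous T) (hTs : Function.Surjective T) (h : auxA F T) : FMixTop F T := by
  by_cases h0 : ∅ ∈ F
  · exact fun _ _ _ _ _ _ => hF _ _ (empty_subset _) h0
  have hA : ∀ U V₁ V₂ : Set X, IsOpen U → IsOpen V₁ → IsOpen V₂ → U.Nonempty → V₁.Nonempty →
      V₂.Nonempty → {n : ℕ | (∃ z ∈ U, T^[n] z ∈ V₁) ∧ ∃ z ∈ U, T^[n] z ∈ V₂} ∈ F := by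
    rintro U V₁ V₂ oU o1 o2 ⟨x, hx⟩ ⟨y₁, hy₁⟩ ⟨y₂, hy₂⟩
    obtain ⟨a, ha, ha'⟩ := Metric.isOpen_iff.1 oU x hx
    obtain ⟨b, hb, hb'⟩ := Metric.isOpen_iff.1 o1 y₁ hy₁
    obtain ⟨c, hc, hc'⟩ := Metric.isOpen_iff.1 o2 y₂ hy₂
    refine hF _ _ ?_ (h x y₁ y₂ (min a (min b c)) (by positivity))
    rintro n ⟨⟨z, hz1, hz2⟩, ⟨w, hw1, hw2⟩⟩
    simp only [lt_min_iff] at hz1 hz2 hw1 hw2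
    exact ⟨⟨z, ha' hz1.1, hb' hz2.2.1⟩, ⟨w, ha' hw1.1, hc' hw2.2.2⟩⟩
  rintro U V oU oV ⟨⟨u1, u2⟩, hu⟩ ⟨⟨v1, v2⟩, hv⟩
  obtain ⟨U₁, U₂, oU1, oU2, mu1, mu2, hUs⟩ := isOpen_prod_iff.1 oU u1 u2 hu
  obtain ⟨V₁, V₂, oV1, oV2, mv1, mv2, hVs⟩ := isOpen_prod_iff.1 oV v1 v2 hv
  have hm := hA U₁ U₂ U₂ oU1 oU2 oU2 ⟨_, mu1⟩ ⟨_, mu2⟩ ⟨_, mu2⟩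
  obtain ⟨m, ⟨x, hx, hx'⟩, _⟩ : Set.Nonempty
      {n : ℕ | (∃ z ∈ U₁, T^[n] z ∈ U₂) ∧ ∃ z ∈ U₁, T^[n] z ∈ U₂} := by
    rw [Set.nonempty_iff_ne_empty]
    intro he
    rw [he] at hm
    exact h0 hm
  obtain ⟨w, hw⟩ := hTs.iterate m v2
  refine hF _ _ ?_ (hA (U₁ ∩ T^[m] ⁻¹' U₂) V₁ (T^[m] ⁻¹' V₂)
    (oU1.inter (oU2.preimage (hT.iterate m))) oV1 (oV2.preimage (hT.iterate m)) ⟨x, hx, hx'⟩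
    ⟨_, mv1⟩ ⟨w, by rw [mem_preimage, hw]; exact mv2⟩)
  rintro n ⟨⟨z, hz, hz'⟩, ⟨y, hy, hy'⟩⟩
  refine ⟨_, ⟨(z, T^[m] y), hUs ⟨hz.1, hy.2⟩, rfl⟩, hVs ?_⟩
  rw [aux_prod_iter]
  refine ⟨hz', ?_⟩
  change T^[n] (T^[m] y) ∈ V₂
  rw [← Function.iterate_add_apply, add_comm, Function.iterate_add_apply]
  exact hy'

lemma aux_core {X : Type*} [MetricSpace X] [CompactSpace X] {S : X → X} {E : Set X}
    (hE : E.Nonempty) {x y₁ y₂ : X} {r : ℝ} (h1 : hausdorffDist E {x} < r)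
    (h2 : hausdorffDist (S '' E) {y₁, y₂} < r) :
    (∃ z, dist z x < r ∧ dist (S z) y₁ < r) ∧ ∃ z, dist z x < r ∧ dist (S z) y₂ < r := by
  have e1 : hausdorffEDist E {x} ≠ ⊤ := hausdorffEDist_ne_top_of_nonempty_of_bounded hE
    (singleton_nonempty x) (Bornology.IsBounded.all _) (Bornology.IsBounded.all _)
  have e2 : hausdorffEDist (S '' E) {y₁, y₂} ≠ ⊤ :=
    hausdorffEDist_ne_top_of_nonempty_of_bounded (hE.image S)
    (insert_nonempty _ _) (Bornology.IsBounded.all _) (Bornology.IsBounded.all _)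
  have key : ∀ y ∈ ({y₁, y₂} : Set X), ∃ z, dist z x < r ∧ dist (S z) y < r := by
    intro y hy
    obtain ⟨_, ⟨z, hz, rfl⟩, hzy⟩ := exists_dist_lt_of_hausdorffDist_lt' hy h2 e2
    obtain ⟨x', hx', hd⟩ := exists_dist_lt_of_hausdorffDist_lt hz h1 e1
    rw [mem_singleton_iff] at hx'
    subst hx'
    exact ⟨z, hd, hzy⟩
  exact ⟨key _ (by simp), key _ (by simp)⟩

lemma aux_hyper_iter {X : Type*} [TopologicalSpace X] (T : X → X) (hT : Continuous T)
    (n : ℕ) (A : NonemptyCompacts X) : (((hyper T hT)^[n] A : NonemptyCompacts X) : Set X)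
      = T^[n] '' (A : Set X) := by
  induction n with
  | zero => simp
  | succ n ih =>
    rw [Function.iterate_succ_apply', Function.iterate_succ', Set.image_comp, ← ih]
    rfl

/-- The fuzzy set with constant value `lam` on a set `K`. -/
noncomputable def auxChi {X : Type*} (lam : ℝ) (K : Set X) : X → ℝ := fun x => if x ∈ K then lam else 0

lemma auxChi_cut {X : Type*} {lam : ℝ} (hl : 0 < lam) (K : Set X) : cut (auxChi lam K) lam = K := by
  ext x
  by_cases h : x ∈ K <;> simp [cut, auxChi, h, hl]

lemma auxChi_mem {X : Type*} [TopologicalSpace X] {lam : ℝ} (hl : lam ∈ Set.Ioc (0:ℝ) 1)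
    {K : Set X} (hK : IsClosed K) (hne : K.Nonempty) : auxChi lam K ∈ Feq X lam := by
  refine ⟨⟨fun x => ?_, aux_usc_of_cut fun α => ?_⟩, ?_, fun x => ?_⟩
  · by_cases h : x ∈ K <;> simp [auxChi, h, hl.1.le, hl.2]
  · by_cases h1 : α ≤ 0
    · convert isClosed_univ
      ext x
      by_cases h : x ∈ K <;> simp [cut, auxChi, h, h1, h1.trans hl.1.le]
    · by_cases h2 : α ≤ lam
      · convert hK
        ext x
        by_cases h : x ∈ K <;> simp [cut, auxChi, h, h2]
        exact not_le.1 h1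
      · convert isClosed_empty
        ext x
        by_cases h : x ∈ K <;> simp [cut, auxChi, h] <;> linarith
  · obtain ⟨x, hx⟩ := hne
    exact ⟨x, by simp [auxChi, hx]⟩
  · by_cases h : x ∈ K <;> simp [auxChi, h, hl.1.le]

lemma auxA_of_fuzzy {X : Type*} [MetricSpace X] [CompactSpace X]
    {T : X → X} (hT : Continuous T) (hTs : Function.Surjective T)
    {F : Set (Set ℕ)} (hF : IsFamily F) {lam : ℝ} (hl : lam ∈ Set.Ioc (0:ℝ) 1)
    (h : FTransOn F dinf (zadeh T) (Feq X lam)) : auxA F T := by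
  intro x y₁ y₂ r hr
  refine hF _ _ ?_ (h (auxChi lam {x}) (auxChi_mem hl isClosed_singleton (singleton_nonempty x))
    (auxChi lam {y₁, y₂}) (auxChi_mem hl (Set.toFinite _).isClosed (insert_nonempty _ _)) r hr)
  rintro n ⟨E, hE, h1, h2⟩
  have g1 := (aux_le_dinf _ _ hl).trans_lt h1
  have g2 := (aux_le_dinf _ _ hl).trans_lt h2
  have hne : (cut E lam).Nonempty := (aux_cut_nonempty hE).2 le_rfl
  rw [auxChi_cut hl.1, eHd, if_pos (Or.inl ⟨hne, singleton_nonempty x⟩)] at g1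
  rw [auxChi_cut hl.1, (aux_zadeh_iter hT hTs hE.1.2 n).2, eHd,
    if_pos (Or.inl ⟨hne.image _, insert_nonempty _ _⟩)] at g2
  exact aux_core hne g1 g2

lemma auxA_of_hyper {X : Type*} [MetricSpace X] [CompactSpace X]
    {T : X → X} (hT : Continuous T)
    {F : Set (Set ℕ)} (hF : IsFamily F)
    (h : FTransTop F (hyper T hT)) : auxA F T := by
  intro x y₁ y₂ r hr
  let A : NonemptyCompacts X := ⟨⟨{x}, isCompact_singleton⟩, singleton_nonempty x⟩
  let B : NonemptyCompacts X := ⟨⟨{y₁, y₂}, (Set.toFinite _).isCompact⟩, insert_nonempty _ _⟩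
  refine hF _ _ ?_ (h (ball A r) (ball B r) isOpen_ball isOpen_ball (nonempty_ball.2 hr)
    (nonempty_ball.2 hr))
  rintro n ⟨_, ⟨E, hE, rfl⟩, hE'⟩
  rw [mem_ball, NonemptyCompacts.dist_eq] at hE hE'
  rw [aux_hyper_iter] at hE'
  exact aux_core E.nonempty hE hE'

lemma aux_hyper_close {X : Type*} [MetricSpace X] [CompactSpace X]
    {T : X → X} (hT : Continuous T) (A B : NonemptyCompacts X) {δ : ℝ} (hδ : 0 ≤ δ) {n : ℕ}
    (hG : auxG T^[n] δ) :
    ∃ E : NonemptyCompacts X, dist E A ≤ δ ∧ dist ((hyper T hT)^[n] E) B ≤ δ := by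
  refine ⟨⟨⟨auxM T^[n] δ A B, (auxM_closed (hT.iterate n) hδ A.isCompact B.isCompact).isCompact⟩,
    auxM_nonempty hG A.nonempty B.nonempty⟩, ?_, ?_⟩
  · exact (auxM_dist hδ hG A.nonempty B.nonempty).1
  · rw [NonemptyCompacts.dist_eq, aux_hyper_iter]
    exact (auxM_dist hδ hG A.nonempty B.nonempty).2

lemma aux_mix_hyper {X : Type*} [MetricSpace X] [CompactSpace X] [Nonempty X]
    {T : X → X} (hT : Continuous T)
    {F : Set (Set ℕ)} (hF : IsFamily F)
    (h : FMixTop F T) : FMixTop F (hyper T hT) := by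
  rintro U V oU oV ⟨⟨A₁, A₂⟩, hA⟩ ⟨⟨B₁, B₂⟩, hB⟩
  obtain ⟨a, ha, ha'⟩ := Metric.isOpen_iff.1 oU _ hA
  obtain ⟨b, hb, hb'⟩ := Metric.isOpen_iff.1 oV _ hB
  have hab : 0 < min a b := lt_min ha hb
  refine hF _ _ ?_ (aux_G_mem hF hT h (half_pos hab))
  intro n hn
  obtain ⟨E₁, h1, h2⟩ := aux_hyper_close hT A₁ B₁ (half_pos hab).le hn
  obtain ⟨E₂, h3, h4⟩ := aux_hyper_close hT A₂ B₂ (half_pos hab).le hn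
  have := min_le_left a b
  have := min_le_right a b
  refine ⟨_, ⟨(E₁, E₂), ha' ?_, rfl⟩, hb' ?_⟩
  · rw [mem_ball, Prod.dist_eq]
    exact max_lt (by dsimp only; linarith) (by dsimp only; linarith)
  · rw [aux_prod_iter, mem_ball, Prod.dist_eq]
    exact max_lt (by dsimp only; linarith) (by dsimp only; linarith)

/-- For a full Furstenberg family `ℱ`: `ℱ`-mixing of `(X,T)` is equivalent to
`ℱ`-transitivity / `ℱ`-mixing of `(K(X), T_K)` and of the Zadeh extension on every
(equivalently, some) `𝔽^{=λ}(X)`. -/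
theorem family_mixing_tfae {X : Type*} [MetricSpace X] [CompactSpace X] [Nontrivial X]
    (T : X → X) (hT : Continuous T) (hTs : Function.Surjective T)
    (F : Set (Set ℕ)) (hF : FullFam F) :
    List.TFAE
      [FMixTop F T,
       FTransTop F (hyper T hT),
       FMixTop F (hyper T hT),
       ∀ lam ∈ Set.Ioc (0:ℝ) 1, FTransOn F dinf (zadeh T) (Feq X lam),
       ∀ lam ∈ Set.Ioc (0:ℝ) 1, FMixOn F dinf (zadeh T) (Feq X lam),
       ∃ lam ∈ Set.Ioc (0:ℝ) 1, FTransOn F dinf (zadeh T) (Feq X lam),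
       ∃ lam ∈ Set.Ioc (0:ℝ) 1, FMixOn F dinf (zadeh T) (Feq X lam)] := by
  have hFam := hF.1
  tfae_have 1 → 3 := aux_mix_hyper hT hFam
  tfae_have 3 → 2 := by
    intro h U V oU oV nU nV
    refine hFam _ _ ?_ (aux_mix_iff hFam h oU oU oV oV nU nU nV nV)
    rintro n ⟨⟨x, hx, hx'⟩, _⟩
    exact ⟨_, ⟨x, hx, rfl⟩, hx'⟩
  tfae_have 2 → 1 := fun h => auxA_mix hFam hT hTs (auxA_of_hyper hT hFam h)
  tfae_have 1 → 5 := by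
    intro h lam hl A₁ hA₁ A₂ hA₂ B₁ hB₁ B₂ hB₂ ε hε
    refine hFam _ _ ?_ (aux_G_mem hFam hT h (half_pos hε))
    intro n hn
    obtain ⟨E₁, m1, h1, h2⟩ := aux_fuzzy hT hTs hA₁ hB₁ (half_pos hε).le hn
    obtain ⟨E₂, m2, h3, h4⟩ := aux_fuzzy hT hTs hA₂ hB₂ (half_pos hε).le hn
    exact ⟨E₁, m1, E₂, m2, by linarith, by linarith, by linarith, by linarith⟩
  have hmt : ∀ lam, FMixOn F dinf (zadeh T) (Feq X lam) →
      FTransOn F dinf (zadeh T) (Feq X lam) := by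
    intro lam h A hA B hB ε hε
    refine hFam _ _ ?_ (h A hA A hA B hB B hB ε hε)
    rintro n ⟨E, hE, _, _, h1, _, h2, _⟩
    exact ⟨E, hE, h1, h2⟩
  tfae_have 5 → 4 := fun h lam hl => hmt lam (h lam hl)
  tfae_have 5 → 7 := fun h => ⟨1, by norm_num, h 1 (by norm_num)⟩
  tfae_have 4 → 6 := fun h => ⟨1, by norm_num, h 1 (by norm_num)⟩
  tfae_have 7 → 6 := fun ⟨lam, hl, h⟩ => ⟨lam, hl, hmt lam h⟩
  tfae_have 6 → 1 := fun ⟨lam, hl, h⟩ => auxA_mix hFam hT hTs (auxA_of_fuzzy hT hTs hFam hl h)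
  tfae_finish
end
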